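/- Let n ≥ 1, let 1 < p ≤ 2, let x be a Hermitian n×n complex matrix, and let u be a Hermitian unitary n×n complex matrix. Then ‖x‖_p² ≥ ‖(x + u x u)/2‖_p² + (p−1)·‖(x − u x u)/2‖_p², where for a Hermitian matrix a, ‖a‖_p := (∑_{i=1}^n |λ_i(a)|^p)^{1/p} and λ_i(a) are the eigenvalues of a counted with multiplicity. -/

import Mathlib

open scoped BigOperators

/-- The Schatten `p`-norm of a Hermitian matrix `a`, defined through its eigenvalues:
`‖a‖_p = (∑ i, |λ_i(a)|^p)^{1/p}` (junk value `0` on non-Hermitian matrices). -/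
noncomputable def hermitianSchattenNorm {n : ℕ} (p : ℝ) (a : Matrix (Fin n) (Fin n) ℂ) : ℝ :=
  if ha : a.IsHermitian then (∑ i, |ha.eigenvalues i| ^ p) ^ (1 / p) else 0

/-!
Write `A = x`, `B = (x + uxu) / 2` and let `λ`, `μ` be the eigenvalues of `A` and `B`. Since
`A - B` anticommutes with `u` while `B` commutes with it, `A - B` is trace-orthogonal to every
function of `B`. Comparing `A` with `B` in their eigenbases and expanding `|λ| ^ p` around `μ` to
second order (Klein's inequality with a remainder), the first-order terms cancel and
`∑ |λ| ^ p - ∑ |μ| ^ p` dominates `p (p - 1) / 2` times `∑ |⟨e, (A - B) f⟩|² m ^ (p - 2)` over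
pairs of eigenvectors `e` of `A` and `f` of `B`, with the weight `m = (2 |μ| + |λ|) / 3`.

The vector of entries `⟨e, (A - B) f⟩` is the image of the eigenvalues of `A - B` under a
Khatri–Rao product of unitaries, which is an isometry. Jensen's inequality for the operator convex
function `t ^ (p - 2)` and Hölder's inequality therefore bound the weighted sum below by
`‖A - B‖_p² (∑ |μ| ^ p * 2 / 3 + ∑ |λ| ^ p / 3) ^ (1 - 2 / p)`. What is left is a scalar inequality
between `∑ |λ| ^ p` and `∑ |μ| ^ p`.
-/

open Matrix

lemma add_mul_sub_le_of_convexOn {s : Set ℝ} {f : ℝ → ℝ} {f' x y : ℝ} (hf : ConvexOn ℝ s f)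
    (hx : x ∈ s) (hy : y ∈ s) (hf' : HasDerivAt f f' x) : f x + f' * (y - x) ≤ f y := by
  rcases lt_trichotomy x y with h | rfl | h
  · have := hf.le_slope_of_hasDerivAt hx hy h hf'
    rw [slope_def_field, le_div_iff₀ (sub_pos.2 h)] at this
    linarith
  · simp
  · have := hf.slope_le_of_hasDerivAt hy hx h hf'
    rw [slope_def_field, div_le_iff₀ (sub_pos.2 h)] at this
    linarith

lemma rpow_add_mul_sub_le_rpow {q m t : ℝ} (hq : q ≤ 0) (hm : 0 < m) (ht : 0 < t) :
    m ^ q + q * m ^ (q - 1) * (t - m) ≤ t ^ q := by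
  have hz : 0 < t / m := div_pos ht hm
  have bernoulli : 1 + q * (t / m - 1) ≤ (t / m) ^ q :=
    calc 1 + q * (t / m - 1) ≤ Real.log (t / m) * q + 1 := by
          nlinarith [Real.log_le_sub_one_of_pos hz]
      _ ≤ Real.exp (Real.log (t / m) * q) := Real.add_one_le_exp _
      _ = (t / m) ^ q := (Real.rpow_def_of_pos hz q).symm
  rw [Real.div_rpow ht.le hm.le, le_div_iff₀ (Real.rpow_pos_of_pos hm q)] at bernoulli
  calc m ^ q + q * m ^ (q - 1) * (t - m) = (1 + q * (t / m - 1)) * m ^ q := by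
        rw [Real.rpow_sub_one hm.ne']
        field_simp
    _ ≤ t ^ q := bernoulli

/-- `t ^ p` minus the quadratic and cubic terms of its Taylor expansion at `m`. Its second
derivative is `p * (p - 1)` times the gap between `t ^ (p - 2)` and its tangent line at `m`. -/
noncomputable def rpowSubTaylor (p m t : ℝ) : ℝ :=
  t ^ p - p * (p - 1) *
    (m ^ (p - 2) * (t - m) ^ 2 / 2 + (p - 2) * m ^ (p - 2 - 1) * (t - m) ^ 3 / 6)

lemma hasDerivAt_rpowSubTaylor {p : ℝ} (hp : 1 ≤ p) (m t : ℝ) :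
    HasDerivAt (rpowSubTaylor p m) (p * t ^ (p - 1) - p * (p - 1) *
      (m ^ (p - 2) * (t - m) + (p - 2) * m ^ (p - 2 - 1) * (t - m) ^ 2 / 2)) t := by
  have hsub := (hasDerivAt_id t).sub_const m
  have hsq := ((hsub.pow 2).const_mul (m ^ (p - 2))).div_const 2
  have hcube := ((hsub.pow 3).const_mul ((p - 2) * m ^ (p - 2 - 1))).div_const 6
  refine ((Real.hasDerivAt_rpow_const (Or.inr hp)).sub
    ((hsq.add hcube).const_mul (p * (p - 1)))).congr_deriv ?_
  simp only [id]
  ring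

lemma convexOn_rpowSubTaylor {p m : ℝ} (hp1 : 1 ≤ p) (hp2 : p ≤ 2) (hm : 0 < m) :
    ConvexOn ℝ (Set.Ici 0) (rpowSubTaylor p m) := by
  have hdiff := hasDerivAt_rpowSubTaylor hp1 m
  refine convexOn_of_hasDerivWithinAt2_nonneg (convex_Ici 0)
    (fun t _ => (hdiff t).continuousAt.continuousWithinAt)
    (fun t _ => (hdiff t).hasDerivWithinAt)
    (f'' := fun t => p * (p - 1) *
      (t ^ (p - 2) - (m ^ (p - 2) + (p - 2) * m ^ (p - 2 - 1) * (t - m)))) ?_ ?_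
  all_goals
    simp only [interior_Ici, Set.mem_Ioi]
    intro t ht
  · have hsub := (hasDerivAt_id t).sub_const m
    have hsq := ((hsub.pow 2).const_mul ((p - 2) * m ^ (p - 2 - 1))).div_const 2
    have hrpow := (Real.hasDerivAt_rpow_const (p := p - 1) (Or.inl ht.ne')).const_mul p
    refine ((hrpow.sub (((hsub.const_mul (m ^ (p - 2))).add hsq).const_mul
      (p * (p - 1)))).congr_deriv ?_).hasDerivWithinAt
    rw [show p - 1 - 1 = p - 2 by ring]
    simp only [id]
    ring
  · have tangent := rpow_add_mul_sub_le_rpow (by linarith : p - 2 ≤ 0) hm ht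
    exact mul_nonneg (by nlinarith) (by linarith)

-- The point `(2β + α) / 3` is chosen so that the cubic Taylor term drops out.
lemma sq_mul_rpow_le_rpow_sub_tangent_of_nonneg {p α β : ℝ} (hp1 : 1 ≤ p) (hp2 : p ≤ 2)
    (hα : 0 ≤ α) (hβ : 0 ≤ β) :
    p * (p - 1) / 2 * (α - β) ^ 2 * ((2 * β + α) / 3) ^ (p - 2) ≤
      α ^ p - β ^ p - p * β ^ (p - 1) * (α - β) := by
  have hm : 0 ≤ (2 * β + α) / 3 := by positivity
  rcases hm.eq_or_lt with hm | hm
  · obtain rfl : β = 0 := by linarith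
    obtain rfl : α = 0 := by linarith
    simp
  have tangent := add_mul_sub_le_of_convexOn (convexOn_rpowSubTaylor hp1 hp2 hm) hβ hα
    (hasDerivAt_rpowSubTaylor hp1 _ β)
  unfold rpowSubTaylor at tangent
  linear_combination tangent

lemma sub_one_mul_mul_rpow_le_rpow {p β m : ℝ} (hp1 : 1 < p) (hp2 : p ≤ 2) (hβ : 0 ≤ β)
    (hm : 2 / 3 * β ≤ m) : (p - 1) * (β * m ^ (p - 2)) ≤ β ^ (p - 1) := by
  rcases hβ.eq_or_lt with rfl | hβ
  · simp [Real.zero_rpow (by linarith : p - 1 ≠ 0)]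
  have hconst : (p - 1) * (2 / 3 : ℝ) ^ (p - 2) ≤ 1 := by
    have hinv : (2 / 3 : ℝ) ^ (p - 2) = (1 + 1 / 2) ^ (2 - p) := by
      rw [show (1 + 1 / 2 : ℝ) = (2 / 3)⁻¹ by norm_num, Real.inv_rpow (by norm_num),
        ← Real.rpow_neg (by norm_num), neg_sub]
    have bernoulli := rpow_one_add_le_one_add_mul_self (s := 1 / 2) (by norm_num) (p := 2 - p)
      (by linarith) (by linarith)
    rw [hinv]
    nlinarith
  have hmβ : m ^ (p - 2) ≤ (2 / 3) ^ (p - 2) * β ^ (p - 2) := by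
    rw [← Real.mul_rpow (by norm_num) hβ.le]
    exact Real.rpow_le_rpow_of_nonpos (by positivity) hm (by linarith)
  have hββ : β ^ (p - 2) * β = β ^ (p - 1) := by
    rw [← Real.rpow_add_one hβ.ne']; ring_nf
  calc (p - 1) * (β * m ^ (p - 2)) ≤ (p - 1) * (β * ((2 / 3) ^ (p - 2) * β ^ (p - 2))) := by gcongr
    _ = (p - 1) * (2 / 3) ^ (p - 2) * β ^ (p - 1) := by rw [← hββ]; ring
    _ ≤ 1 * β ^ (p - 1) := by gcongr
    _ = β ^ (p - 1) := one_mul _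

lemma sq_mul_rpow_le_abs_rpow_sub_tangent {p : ℝ} (hp1 : 1 < p) (hp2 : p ≤ 2) (α β : ℝ) :
    p * (p - 1) / 2 * (α - β) ^ 2 * ((2 * |β| + |α|) / 3) ^ (p - 2) ≤
      |α| ^ p - |β| ^ p - p * (|β| ^ (p - 2) * β) * (α - β) := by
  wlog hβ : 0 ≤ β generalizing α β
  · have := this (-α) (-β) (by linarith)
    simp only [abs_neg] at this
    linarith
  have hββ : β ^ (p - 2) * β = β ^ (p - 1) := by
    rcases hβ.eq_or_lt with rfl | hβ
    · simp [Real.zero_rpow (by linarith : p - 1 ≠ 0)]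
    · rw [← Real.rpow_add_one hβ.ne']; ring_nf
  have same_sign := sq_mul_rpow_le_rpow_sub_tangent_of_nonneg hp1.le hp2 (abs_nonneg α) hβ
  rw [abs_of_nonneg hβ, hββ]
  rcases le_total 0 α with hα | hα
  · rwa [abs_of_nonneg hα] at same_sign ⊢
  -- Replacing `|α|` by `α` changes both sides by a multiple of `|α|`.
  have hcross := mul_le_mul_of_nonneg_left
    (sub_one_mul_mul_rpow_le_rpow (m := (2 * β + |α|) / 3) hp1 hp2 hβ
      (by linarith [abs_nonneg α]))
    (show 0 ≤ 2 * p * |α| by positivity)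
  rw [abs_of_nonpos hα] at same_sign hcross ⊢
  linarith

lemma one_add_half_mul_sub_one_le_rpow {r z : ℝ} (hr : 0 ≤ r) (hz1 : 1 ≤ z) (hz3 : z ≤ 3) :
    1 + r / 2 * (z - 1) ≤ z ^ r := by
  have log_three : 1 ≤ Real.log 3 := by
    rw [Real.le_log_iff_exp_le (by norm_num)]
    linarith [Real.exp_one_lt_d9]
  have log_chord : (z - 1) / 2 ≤ Real.log z := by
    have hc := (strictConcaveOn_log_Ioi.concaveOn).2
      (show (1:ℝ) ∈ Set.Ioi 0 by simp) (show (3:ℝ) ∈ Set.Ioi 0 by simp)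
      (show 0 ≤ (3 - z) / 2 by linarith) (show 0 ≤ (z - 1) / 2 by linarith) (by ring)
    simp only [smul_eq_mul, Real.log_one, mul_zero, zero_add, mul_one] at hc
    rw [show (3 - z) / 2 + (z - 1) / 2 * 3 = z by ring] at hc
    nlinarith
  calc 1 + r / 2 * (z - 1) ≤ Real.log z * r + 1 := by nlinarith
    _ ≤ Real.exp (Real.log z * r) := Real.add_one_le_exp _
    _ = z ^ r := (Real.rpow_def_of_pos (by linarith) r).symm

lemma sub_mul_rpow_le_rpow_sub_rpow {r a b : ℝ} (hr : 1 ≤ r) (hb : 0 ≤ b) (hba : b ≤ a) :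
    (a - b) * ((2 * b + a) / 3) ^ (r - 1) ≤ (a ^ r - b ^ r) / r := by
  let gap : ℝ → ℝ := fun t => (t ^ r - b ^ r) / r - (t - b) * ((2 * b + t) / 3) ^ (r - 1)
  have hgap : MonotoneOn gap (Set.Ici b) := by
    refine monotoneOn_of_hasDerivWithinAt_nonneg (convex_Ici b) (f' := fun t => t ^ (r - 1) -
      (((2 * b + t) / 3) ^ (r - 1) + (t - b) * ((r - 1) / 3 * ((2 * b + t) / 3) ^ (r - 1 - 1))))
      ?_ ?_ ?_
    · have hpow : Continuous fun t : ℝ => t ^ r := Real.continuous_rpow_const (by linarith)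
      have hmean : Continuous fun t : ℝ => ((2 * b + t) / 3) ^ (r - 1) :=
        (Real.continuous_rpow_const (by linarith)).comp (by fun_prop)
      fun_prop
    all_goals
      simp only [interior_Ici, Set.mem_Ioi]
      intro t ht
      have hN : 0 < (2 * b + t) / 3 := by linarith
    · have hpow := ((Real.hasDerivAt_rpow_const (x := t) (Or.inr hr)).sub_const (b ^ r)).div_const r
      have hmean := (((hasDerivAt_id t).const_add (2 * b)).div_const 3).rpow_const (p := r - 1)
        (Or.inl hN.ne')
      refine ((hpow.sub (((hasDerivAt_id t).sub_const b).mul hmean)).congr_deriv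
        ?_).hasDerivWithinAt
      simp only [id]
      field_simp
    · set N := (2 * b + t) / 3 with hNdef
      have chord := one_add_half_mul_sub_one_le_rpow (r := r - 1) (z := t / N) (by linarith)
        (by rw [le_div_iff₀ hN]; linarith) (by rw [div_le_iff₀ hN]; linarith)
      rw [Real.div_rpow (by linarith) hN.le, le_div_iff₀ (Real.rpow_pos_of_pos hN _)] at chord
      rw [Real.rpow_sub_one hN.ne' (r - 1)]
      have htb : t - b = 3 / 2 * (t - N) := by rw [hNdef]; ring
      calc 0 ≤ t ^ (r - 1) - (1 + (r - 1) / 2 * (t / N - 1)) * N ^ (r - 1) := sub_nonneg.2 chord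
        _ = _ := by rw [htb]; field_simp
  have := hgap (Set.mem_Ici.2 le_rfl) (Set.mem_Ici.2 hba) hba
  simp only [gap, sub_self, zero_div, zero_mul] at this
  linarith

lemma norm_add_sq_le_add_div_add_mul {E : Type*} [SeminormedAddGroup E] (a b : E) {y : ℝ}
    (hy : 0 < y) : ‖a + b‖ ^ 2 ≤ ‖a‖ ^ 2 + ‖b‖ ^ 2 + (‖a‖ ^ 2 / y + ‖b‖ ^ 2 * y) := by
  have amgm : 2 * (‖a‖ * ‖b‖) ≤ ‖a‖ ^ 2 / y + ‖b‖ ^ 2 * y := by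
    rw [← sub_nonneg]
    calc 0 ≤ (‖a‖ - y * ‖b‖) ^ 2 / y := by positivity
      _ = _ := by field_simp; ring
  calc ‖a + b‖ ^ 2 ≤ (‖a‖ + ‖b‖) ^ 2 := by gcongr; exact norm_add_le a b
    _ ≤ _ := by linarith

lemma exists_measure_rpow_eq_integral_rpow_div {q : ℝ} (hq1 : -1 < q) (hq0 : q < 0) :
    ∃ μ : MeasureTheory.Measure ℝ, ∀ x, 0 < x →
      MeasureTheory.IntegrableOn (fun t => t ^ q / (x + t)) (Set.Ioi 0) μ ∧
        x ^ q = ∫ t in Set.Ioi 0, t ^ q / (x + t) ∂μ := by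
  have hq : q + 1 ∈ Set.Ioo 0 1 := ⟨by linarith, by linarith⟩
  obtain ⟨μ, hμ⟩ := Real.exists_measure_rpow_eq_integral_rpowIntegrand₀₁ hq
  refine ⟨μ, fun x hx => ?_⟩
  obtain ⟨hint, heq⟩ := hμ x hx.le
  have integrand : Set.EqOn (fun t => x⁻¹ * Real.rpowIntegrand₀₁ (q + 1) t x)
      (fun t => t ^ q / (x + t)) (Set.Ioi 0) := fun t ht => by
    simp only [Real.rpowIntegrand₀₁_eq_pow_div hq (Set.mem_Ioi.1 ht).le hx.le, add_sub_cancel_right,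
      add_comm t x]
    field_simp
  refine ⟨(MeasureTheory.integrableOn_congr_fun integrand measurableSet_Ioi).1
    (hint.const_mul x⁻¹), ?_⟩
  rw [← MeasureTheory.setIntegral_congr_fun measurableSet_Ioi integrand,
    MeasureTheory.integral_const_mul, ← heq, Real.rpow_add_one hx.ne']
  field_simp

-- `x ^ q` is a positive combination of the resolvents `1 / (x + s)`.
lemma sum_mul_rpow_le_sum_mul_rpow_of_forall_sum_div_le {ι κ : Type*} [Fintype ι] [Fintype κ]
    {q : ℝ} (hq1 : -1 < q) (hq0 : q < 0) {w y : ι → ℝ} {c X : κ → ℝ}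
    (hy : ∀ i, 0 ≤ y i) (hX : ∀ l, 0 ≤ X l) (hw : ∀ i, y i = 0 → w i = 0)
    (hc : ∀ l, X l = 0 → c l = 0)
    (h : ∀ s, 0 < s → ∑ l, c l / (X l + s) ≤ ∑ i, w i / (y i + s)) :
    ∑ l, c l * X l ^ q ≤ ∑ i, w i * y i ^ q := by
  obtain ⟨μ, hμ⟩ := exists_measure_rpow_eq_integral_rpow_div hq1 hq0
  have term : ∀ a x : ℝ, 0 ≤ x → (x = 0 → a = 0) →
      MeasureTheory.IntegrableOn (fun t => a * (t ^ q / (x + t))) (Set.Ioi 0) μ ∧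
        a * x ^ q = ∫ t in Set.Ioi 0, a * (t ^ q / (x + t)) ∂μ := fun a x hx ha => by
    rcases hx.eq_or_lt with rfl | hx
    · simp [ha rfl]
    · exact ⟨(hμ x hx).1.const_mul a, by rw [MeasureTheory.integral_const_mul, ← (hμ x hx).2]⟩
  have hcX := fun l => term (c l) (X l) (hX l) (hc l)
  have hwy := fun i => term (w i) (y i) (hy i) (hw i)
  simp only [(hcX _).2, (hwy _).2]
  rw [← MeasureTheory.integral_finsetSum _ fun l _ => (hcX l).1,
    ← MeasureTheory.integral_finsetSum _ fun i _ => (hwy i).1]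
  refine MeasureTheory.setIntegral_mono_on
    (MeasureTheory.integrable_finsetSum _ fun l _ => (hcX l).1)
    (MeasureTheory.integrable_finsetSum _ fun i _ => (hwy i).1) measurableSet_Ioi fun t ht => ?_
  have scaled := mul_le_mul_of_nonneg_left (h t ht) (Real.rpow_nonneg (Set.mem_Ioi.1 ht).le q)
  simpa only [Finset.mul_sum, mul_div_left_comm] using scaled

lemma sum_rpow_rpow_two_div_le {κ : Type*} [Fintype κ] {p : ℝ} (hp0 : 0 < p) (hp2 : p ≤ 2)
    {c X : κ → ℝ} (hc : ∀ l, 0 ≤ c l) (hX : ∀ l, 0 ≤ X l) (hXc : ∀ l, X l = 0 → c l = 0) :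
    (∑ l, c l ^ p) ^ (2 / p) ≤ (∑ l, c l ^ 2 * X l ^ (p - 2)) * (∑ l, X l ^ p) ^ (2 / p - 1) := by
  have holder := Real.inner_le_weight_mul_Lp_of_nonneg Finset.univ (p := 2 / p)
    (by rw [le_div_iff₀ hp0]; linarith) (fun l => X l ^ p) (fun l => c l ^ p * X l ^ (-p))
    (fun l => Real.rpow_nonneg (hX l) p)
    (fun l => mul_nonneg (Real.rpow_nonneg (hc l) p) (Real.rpow_nonneg (hX l) _))
  have weight_mul : ∀ l, X l ^ p * (c l ^ p * X l ^ (-p)) = c l ^ p := fun l => by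
    rcases (hX l).eq_or_lt with h | h
    · simp [hXc l h.symm, Real.zero_rpow hp0.ne']
    · rw [mul_left_comm, ← Real.rpow_add h, add_neg_cancel, Real.rpow_zero, mul_one]
  have weight_mul_rpow : ∀ l, X l ^ p * (c l ^ p * X l ^ (-p)) ^ (2 / p) =
      c l ^ 2 * X l ^ (p - 2) := fun l => by
    rw [Real.mul_rpow (Real.rpow_nonneg (hc l) p) (Real.rpow_nonneg (hX l) _),
      ← Real.rpow_mul (hc l), ← Real.rpow_mul (hX l), mul_div_cancel₀ _ hp0.ne',
      neg_mul, mul_div_cancel₀ _ hp0.ne', Real.rpow_two, mul_left_comm]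
    rcases (hX l).eq_or_lt with h | h
    · simp [hXc l h.symm]
    · rw [← Real.rpow_add h, ← sub_eq_add_neg]
  simp only [weight_mul, weight_mul_rpow, inv_div] at holder
  have hXsum : 0 ≤ ∑ l, X l ^ p := Finset.sum_nonneg fun l _ => Real.rpow_nonneg (hX l) p
  have hsum : 0 ≤ ∑ l, c l ^ 2 * X l ^ (p - 2) :=
    Finset.sum_nonneg fun l _ => mul_nonneg (sq_nonneg _) (Real.rpow_nonneg (hX l) _)
  calc (∑ l, c l ^ p) ^ (2 / p)
      ≤ ((∑ l, X l ^ p) ^ (1 - p / 2) * (∑ l, c l ^ 2 * X l ^ (p - 2)) ^ (p / 2)) ^ (2 / p) :=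
        Real.rpow_le_rpow (Finset.sum_nonneg fun l _ => Real.rpow_nonneg (hc l) p) holder
          (by positivity)
    _ = _ := by
        rw [Real.mul_rpow (by positivity) (by positivity), ← Real.rpow_mul hXsum,
          ← Real.rpow_mul hsum, mul_comm]
        congr 1
        · rw [div_mul_div_cancel₀ two_ne_zero, div_self hp0.ne', Real.rpow_one]
        · congr 1
          field_simp

section Compression

variable {ι κ 𝕜 : Type*} [Fintype ι] [RCLike 𝕜] {V : Matrix ι κ 𝕜} {y : ι → ℝ} {X : κ → ℝ}

lemma conjTranspose_mul_diagonal_mul_apply_self [DecidableEq ι] (V : Matrix ι κ 𝕜) (y : ι → ℝ)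
    (l : κ) :
    (Vᴴ * diagonal (fun i => (y i : 𝕜)) * V) l l = ((∑ i, ‖V i l‖ ^ 2 * y i : ℝ) : 𝕜) := by
  rw [mul_apply]
  simp only [mul_diagonal, conjTranspose_apply, RCLike.star_def, mul_right_comm _ (RCLike.ofReal _),
    RCLike.conj_mul]
  push_cast
  rfl

variable [DecidableEq κ]

lemma sum_norm_sq_of_conjTranspose_mul_self_eq_one (hV : Vᴴ * V = 1) (l : κ) :
    ∑ i, ‖V i l‖ ^ 2 = 1 := by
  have diag := congrFun₂ hV l l
  simp only [mul_apply, conjTranspose_apply, RCLike.star_def, RCLike.conj_mul, one_apply_eq] at diag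
  exact_mod_cast diag

lemma sum_norm_mulVec_sq_of_conjTranspose_mul_self_eq_one [Fintype κ] (hV : Vᴴ * V = 1)
    (c : κ → 𝕜) : ∑ i, ‖(V *ᵥ c) i‖ ^ 2 = ∑ l, ‖c l‖ ^ 2 := by
  have form : star (V *ᵥ c) ⬝ᵥ (V *ᵥ c) = star c ⬝ᵥ c := by
    rw [star_mulVec, ← dotProduct_mulVec, mulVec_mulVec, hV, one_mulVec]
  simp only [dotProduct, Pi.star_apply, RCLike.star_def, RCLike.conj_mul] at form
  exact_mod_cast form

variable [DecidableEq ι]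

lemma sum_norm_sq_mul_eq_of_compression
    (hX : Vᴴ * diagonal (fun i => (y i : 𝕜)) * V = diagonal fun l => (X l : 𝕜)) (l : κ) :
    ∑ i, ‖V i l‖ ^ 2 * y i = X l := by
  have diag := congrFun₂ hX l l
  rw [conjTranspose_mul_diagonal_mul_apply_self, diagonal_apply_eq] at diag
  exact_mod_cast diag

lemma nonneg_of_compression
    (hX : Vᴴ * diagonal (fun i => (y i : 𝕜)) * V = diagonal fun l => (X l : 𝕜))
    (hy : ∀ i, 0 ≤ y i) (l : κ) : 0 ≤ X l :=
  sum_norm_sq_mul_eq_of_compression hX l ▸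
    Finset.sum_nonneg fun i _ => mul_nonneg (sq_nonneg _) (hy i)

lemma compression_rpow_le {p : ℝ} (hp : 1 ≤ p) (hV : Vᴴ * V = 1)
    (hX : Vᴴ * diagonal (fun i => (y i : 𝕜)) * V = diagonal fun l => (X l : 𝕜))
    (hy : ∀ i, 0 ≤ y i) (l : κ) : X l ^ p ≤ ∑ i, ‖V i l‖ ^ 2 * y i ^ p := by
  rw [← sum_norm_sq_mul_eq_of_compression hX l]
  exact Real.rpow_arith_mean_le_arith_mean_rpow _ _ _ (fun _ _ => sq_nonneg _)
    (sum_norm_sq_of_conjTranspose_mul_self_eq_one hV l) (fun i _ => hy i) hp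

variable [Fintype κ]

lemma sum_mul_norm_mulVec_sq_of_compression
    (hX : Vᴴ * diagonal (fun i => (y i : 𝕜)) * V = diagonal fun l => (X l : 𝕜)) (c : κ → 𝕜) :
    ∑ i, ‖(V *ᵥ c) i‖ ^ 2 * y i = ∑ l, ‖c l‖ ^ 2 * X l := by
  have form : star (V *ᵥ c) ⬝ᵥ diagonal (fun i => (y i : 𝕜)) *ᵥ (V *ᵥ c) =
      star c ⬝ᵥ diagonal (fun l => (X l : 𝕜)) *ᵥ c := by
    rw [← hX, star_mulVec, ← dotProduct_mulVec, mulVec_mulVec, mulVec_mulVec, Matrix.mul_assoc]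
  simp only [dotProduct, mulVec_diagonal, Pi.star_apply, RCLike.star_def,
    mul_left_comm _ (RCLike.ofReal _), RCLike.conj_mul] at form
  simp only [mul_comm (‖_‖ ^ 2)]
  exact_mod_cast form

lemma sum_norm_sq_div_le_of_compression (hV : Vᴴ * V = 1)
    (hX : Vᴴ * diagonal (fun i => (y i : 𝕜)) * V = diagonal fun l => (X l : 𝕜))
    (hy : ∀ i, 0 < y i) (hXpos : ∀ l, 0 < X l) (c : κ → 𝕜) :
    ∑ l, ‖c l‖ ^ 2 / X l ≤ ∑ i, ‖(V *ᵥ c) i‖ ^ 2 / y i := by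
  let d : κ → 𝕜 := fun l => ((X l)⁻¹ : ℝ) • c l
  have hd : ∀ l, ‖d l‖ = ‖c l‖ / X l := fun l => by
    rw [norm_smul, Real.norm_of_nonneg (inv_nonneg.2 (hXpos l).le), inv_mul_eq_div]
  have hcd : ∀ l, ‖(c + d) l‖ = ‖c l‖ + ‖c l‖ / X l := fun l => by
    have : (c + d) l = (1 + (X l)⁻¹ : ℝ) • c l := by rw [add_smul, one_smul]; rfl
    rw [this, norm_smul, Real.norm_of_nonneg (by have := hXpos l; positivity)]
    ring
  have polarized : ∑ l, ‖(c + d) l‖ ^ 2 ≤ ∑ l, ‖c l‖ ^ 2 + ∑ l, ‖d l‖ ^ 2 +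
      (∑ i, ‖(V *ᵥ c) i‖ ^ 2 / y i + ∑ l, ‖d l‖ ^ 2 * X l) := by
    simp only [← sum_norm_mulVec_sq_of_conjTranspose_mul_self_eq_one hV,
      ← sum_mul_norm_mulVec_sq_of_compression hX, mulVec_add, ← Finset.sum_add_distrib]
    exact Finset.sum_le_sum fun i _ => norm_add_sq_le_add_div_add_mul _ _ (hy i)
  have expand : ∑ l, ‖(c + d) l‖ ^ 2 = ∑ l, ‖c l‖ ^ 2 + ∑ l, ‖d l‖ ^ 2 +
      (∑ l, ‖c l‖ ^ 2 / X l + ∑ l, ‖d l‖ ^ 2 * X l) := by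
    simp only [← Finset.sum_add_distrib]
    refine Finset.sum_congr rfl fun l _ => ?_
    have := (hXpos l).ne'
    rw [hcd, hd]
    field_simp
    ring
  linarith

lemma eq_zero_of_compression_eq_zero (hV : Vᴴ * V = 1)
    (hX : Vᴴ * diagonal (fun i => (y i : 𝕜)) * V = diagonal fun l => (X l : 𝕜))
    (hy : ∀ i, 0 ≤ y i) {c : κ → 𝕜} (hc : ∀ i, y i = 0 → (V *ᵥ c) i = 0) {l : κ}
    (hl : X l = 0) : c l = 0 := by
  have hVy : ∀ i, ‖V i l‖ ^ 2 * y i = 0 := by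
    rw [← sum_norm_sq_mul_eq_of_compression hX l, Finset.sum_eq_zero_iff_of_nonneg
      fun i _ => mul_nonneg (sq_nonneg _) (hy i)] at hl
    exact fun i => hl i (Finset.mem_univ i)
  have hterm : ∀ i, star (V i l) * (V *ᵥ c) i = 0 := fun i => by
    rcases mul_eq_zero.1 (hVy i) with h | h
    · simp [norm_eq_zero.1 (pow_eq_zero_iff two_ne_zero |>.1 h)]
    · simp [hc i h]
  calc c l = (Vᴴ *ᵥ (V *ᵥ c)) l := by rw [mulVec_mulVec, hV, one_mulVec]
    _ = 0 := Finset.sum_eq_zero fun i _ => hterm i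

-- Jensen's inequality for the operator convex function `t ^ q`.
lemma sum_norm_sq_mul_rpow_le_of_compression {q : ℝ} (hq1 : -1 < q) (hq0 : q ≤ 0)
    (hV : Vᴴ * V = 1)
    (hX : Vᴴ * diagonal (fun i => (y i : 𝕜)) * V = diagonal fun l => (X l : 𝕜))
    (hy : ∀ i, 0 ≤ y i) {c : κ → 𝕜} (hc : ∀ i, y i = 0 → (V *ᵥ c) i = 0) :
    ∑ l, ‖c l‖ ^ 2 * X l ^ q ≤ ∑ i, ‖(V *ᵥ c) i‖ ^ 2 * y i ^ q := by
  rcases hq0.eq_or_lt with rfl | hq0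
  · simpa only [Real.rpow_zero, mul_one] using
      (sum_norm_mulVec_sq_of_conjTranspose_mul_self_eq_one hV c).ge
  have hXnonneg := nonneg_of_compression hX hy
  refine sum_mul_rpow_le_sum_mul_rpow_of_forall_sum_div_le hq1 hq0 hy hXnonneg
    (fun i hi => by simp [hc i hi])
    (fun l hl => by simp [eq_zero_of_compression_eq_zero hV hX hy hc hl]) fun s hs => ?_
  have shifted : Vᴴ * diagonal (fun i => ((y i + s : ℝ) : 𝕜)) * V =
      diagonal fun l => ((X l + s : ℝ) : 𝕜) := by
    simp only [RCLike.ofReal_add, ← diagonal_add, ← smul_one_eq_diagonal, Matrix.mul_add,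
      Matrix.add_mul, hX, Matrix.mul_smul, Matrix.smul_mul, Matrix.mul_one, hV]
  exact sum_norm_sq_div_le_of_compression hV shifted (fun i => by linarith [hy i])
    (fun l => by linarith [hXnonneg l]) c

lemma sum_norm_rpow_rpow_two_div_le_of_compression {p : ℝ} (hp1 : 1 < p) (hp2 : p ≤ 2)
    (hV : Vᴴ * V = 1)
    (hX : Vᴴ * diagonal (fun i => (y i : 𝕜)) * V = diagonal fun l => (X l : 𝕜))
    (hy : ∀ i, 0 ≤ y i) {c : κ → 𝕜} (hc : ∀ i, y i = 0 → (V *ᵥ c) i = 0) :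
    (∑ l, ‖c l‖ ^ p) ^ (2 / p) ≤
      (∑ i, ‖(V *ᵥ c) i‖ ^ 2 * y i ^ (p - 2)) *
        (∑ l, ∑ i, ‖V i l‖ ^ 2 * y i ^ p) ^ (2 / p - 1) := by
  have hXnonneg := nonneg_of_compression hX hy
  have hp0 : 0 < p := by linarith
  have hexp : 0 ≤ 2 / p - 1 := by rw [sub_nonneg, le_div_iff₀ hp0]; linarith
  calc (∑ l, ‖c l‖ ^ p) ^ (2 / p)
      ≤ (∑ l, ‖c l‖ ^ 2 * X l ^ (p - 2)) * (∑ l, X l ^ p) ^ (2 / p - 1) :=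
        sum_rpow_rpow_two_div_le hp0 hp2 (fun l => norm_nonneg _) hXnonneg fun l hl => by
          simp [eq_zero_of_compression_eq_zero hV hX hy hc hl]
    _ ≤ _ := by
        have hXp := Finset.sum_nonneg fun l (_ : l ∈ Finset.univ) =>
          Real.rpow_nonneg (hXnonneg l) p
        gcongr
        · exact Finset.sum_nonneg fun i _ =>
            mul_nonneg (sq_nonneg _) (Real.rpow_nonneg (hy i) _)
        · exact sum_norm_sq_mul_rpow_le_of_compression (by linarith) (by linarith) hV hX hy hc
        · exact compression_rpow_le hp1.le hV hX hy _

end Compression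

section KhatriRao

open scoped Kronecker

/-- The column-wise Khatri–Rao product: its `l`-th column is the Kronecker product of the `l`-th
columns of `P` and `Q`. It turns the product `P * diagonal c * Qᵀ`, read as a vector indexed by
pairs, into a linear function of `c`. -/
def khatriRao {m n k R : Type*} [Mul R] (P : Matrix m k R) (Q : Matrix n k R) :
    Matrix (m × n) k R :=
  (P ⊗ₖ Q).submatrix id fun l => (l, l)

lemma khatriRao_apply {m n k R : Type*} [Mul R] (P : Matrix m k R) (Q : Matrix n k R) (i : m × n)
    (l : k) : khatriRao P Q i l = P i.1 l * Q i.2 l := rfl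

lemma khatriRao_mulVec_apply {m n k R : Type*} [CommSemiring R] [Fintype k] [DecidableEq k]
    (P : Matrix m k R) (Q : Matrix n k R) (c : k → R) (i : m) (j : n) :
    (khatriRao P Q *ᵥ c) (i, j) = (P * diagonal c * Qᵀ) i j := by
  simp only [mulVec, dotProduct, khatriRao_apply, mul_apply (M := P * diagonal c), mul_diagonal,
    transpose_apply, mul_right_comm]

lemma conjTranspose_khatriRao_mul_kronecker_mul_khatriRao {m n k R : Type*} [CommSemiring R]
    [StarRing R] [Fintype m] [Fintype n] (P : Matrix m k R) (Q : Matrix n k R)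
    (C : Matrix m m R) (D : Matrix n n R) :
    (khatriRao P Q)ᴴ * (C ⊗ₖ D) * khatriRao P Q = (Pᴴ * C * P) ⊙ (Qᴴ * D * Q) := by
  calc (khatriRao P Q)ᴴ * (C ⊗ₖ D) * khatriRao P Q
      = ((P ⊗ₖ Q)ᴴ * (C ⊗ₖ D) * (P ⊗ₖ Q)).submatrix (fun l => (l, l)) fun l => (l, l) := rfl
    _ = ((Pᴴ * C * P) ⊗ₖ (Qᴴ * D * Q)).submatrix (fun l => (l, l)) fun l => (l, l) := by
        rw [conjTranspose_kronecker, ← mul_kronecker_mul, ← mul_kronecker_mul]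
    _ = (Pᴴ * C * P) ⊙ (Qᴴ * D * Q) := rfl

variable {m n k 𝕜 : Type*} [Fintype m] [Fintype n] [DecidableEq k] [RCLike 𝕜]
  {P : Matrix m k 𝕜} {Q : Matrix n k 𝕜}

lemma conjTranspose_khatriRao_mul_self (hP : Pᴴ * P = 1) (hQ : Qᴴ * Q = 1) :
    (khatriRao P Q)ᴴ * khatriRao P Q = 1 := by
  classical
  have := conjTranspose_khatriRao_mul_kronecker_mul_khatriRao P Q 1 1
  simpa [hP, hQ, hadamard_one] using this

variable [DecidableEq m] [DecidableEq n]

lemma khatriRao_compression (hP : Pᴴ * P = 1) (hQ : Qᴴ * Q = 1) (s t : ℝ) (a : m → ℝ)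
    (b : n → ℝ) :
    (khatriRao P Q)ᴴ * diagonal (fun i : m × n => ((s * a i.1 + t * b i.2 : ℝ) : 𝕜)) *
        khatriRao P Q =
      diagonal fun l =>
        ((s * ∑ i, ‖P i l‖ ^ 2 * a i + t * ∑ j, ‖Q j l‖ ^ 2 * b j : ℝ) : 𝕜) := by
  have split : diagonal (fun i : m × n => ((s * a i.1 + t * b i.2 : ℝ) : 𝕜)) =
      (s : 𝕜) • (diagonal (fun i => (a i : 𝕜)) ⊗ₖ (1 : Matrix n n 𝕜)) +
        (t : 𝕜) • ((1 : Matrix m m 𝕜) ⊗ₖ diagonal (fun j => (b j : 𝕜))) := by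
    simp only [← diagonal_one, diagonal_kronecker_diagonal, ← diagonal_smul, diagonal_add]
    simp
  rw [split]
  simp only [Matrix.mul_add, Matrix.add_mul, Matrix.mul_smul, Matrix.smul_mul,
    conjTranspose_khatriRao_mul_kronecker_mul_khatriRao, Matrix.mul_one, hP, hQ, hadamard_one,
    one_hadamard, ← diagonal_smul, diagonal_add]
  simp [conjTranspose_mul_diagonal_mul_apply_self]

end KhatriRao

section Unitary

variable {n 𝕜 : Type*} [Fintype n] [DecidableEq n] [RCLike 𝕜] {P R : Matrix n n 𝕜}

lemma sum_row_norm_sq_of_mem_unitaryGroup (hP : P ∈ unitaryGroup n 𝕜) (i : n) :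
    ∑ l, ‖P i l‖ ^ 2 = 1 := by
  simpa using sum_norm_sq_of_conjTranspose_mul_self_eq_one (V := Pᴴ)
    (by rw [conjTranspose_conjTranspose]; exact mem_unitaryGroup_iff.1 hP) i

lemma sum_sum_norm_sq_mul_of_mem_unitaryGroup (hP : P ∈ unitaryGroup n 𝕜) (a : n → ℝ) :
    ∑ l, ∑ i, ‖P i l‖ ^ 2 * a i = ∑ i, a i := by
  rw [Finset.sum_comm]
  simp only [← Finset.sum_mul, sum_row_norm_sq_of_mem_unitaryGroup hP, one_mul]

lemma sum_norm_sq_khatriRao_mul_rpow_le {Q : Matrix n n 𝕜} {p : ℝ} (hp : 1 ≤ p)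
    (hP : P ∈ unitaryGroup n 𝕜) (hQ : Q ∈ unitaryGroup n 𝕜) {s t : ℝ} (hs : 0 ≤ s)
    (ht : 0 ≤ t) (hst : s + t = 1) {a b : n → ℝ} (ha : ∀ i, 0 ≤ a i) (hb : ∀ j, 0 ≤ b j) :
    ∑ l, ∑ i, ‖khatriRao P Q i l‖ ^ 2 * (s * a i.1 + t * b i.2) ^ p ≤
      s * ∑ i, a i ^ p + t * ∑ j, b j ^ p := by
  have hPcol := sum_norm_sq_of_conjTranspose_mul_self_eq_one (mem_unitaryGroup_iff'.1 hP)
  have hQcol := sum_norm_sq_of_conjTranspose_mul_self_eq_one (mem_unitaryGroup_iff'.1 hQ)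
  calc ∑ l, ∑ i, ‖khatriRao P Q i l‖ ^ 2 * (s * a i.1 + t * b i.2) ^ p
      ≤ ∑ l, ∑ i, ‖khatriRao P Q i l‖ ^ 2 * (s * a i.1 ^ p + t * b i.2 ^ p) := by
        gcongr with l _ i
        exact (convexOn_rpow hp).2 (ha i.1) (hb i.2) hs ht hst
    _ = ∑ l, (s * ∑ i, ‖P i l‖ ^ 2 * a i ^ p + t * ∑ j, ‖Q j l‖ ^ 2 * b j ^ p) := by
        refine Finset.sum_congr rfl fun l _ => ?_
        have marginals : ∀ i : n × n,
            ‖khatriRao P Q i l‖ ^ 2 * (s * a i.1 ^ p + t * b i.2 ^ p) =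
              s * (‖P i.1 l‖ ^ 2 * a i.1 ^ p * ‖Q i.2 l‖ ^ 2) +
                t * (‖P i.1 l‖ ^ 2 * (‖Q i.2 l‖ ^ 2 * b i.2 ^ p)) := fun i => by
          rw [khatriRao_apply, norm_mul]
          ring
        simp only [marginals, Finset.sum_add_distrib, Fintype.sum_prod_type, ← Finset.mul_sum,
          ← Finset.sum_mul, hPcol, hQcol, mul_one, one_mul]
    _ = s * ∑ i, a i ^ p + t * ∑ j, b j ^ p := by
        rw [Finset.sum_add_distrib, ← Finset.mul_sum, ← Finset.mul_sum,
          sum_sum_norm_sq_mul_of_mem_unitaryGroup hP, sum_sum_norm_sq_mul_of_mem_unitaryGroup hQ]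

lemma sum_norm_rpow_rpow_two_div_le_of_mem_unitaryGroup {p : ℝ} (hp1 : 1 < p) (hp2 : p ≤ 2)
    (hP : P ∈ unitaryGroup n 𝕜) (hR : R ∈ unitaryGroup n 𝕜) {s t : ℝ} (hs : 0 ≤ s) (ht : 0 ≤ t)
    (hst : s + t = 1) {a b : n → ℝ} (ha : ∀ i, 0 ≤ a i) (hb : ∀ j, 0 ≤ b j) {c : n → 𝕜}
    (hc : ∀ i j, s * a i + t * b j = 0 → (P * diagonal c * R) i j = 0) :
    (∑ l, ‖c l‖ ^ p) ^ (2 / p) ≤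
      (∑ i, ∑ j, ‖(P * diagonal c * R) i j‖ ^ 2 * (s * a i + t * b j) ^ (p - 2)) *
        (s * ∑ i, a i ^ p + t * ∑ j, b j ^ p) ^ (2 / p - 1) := by
  have hRt : Rᵀ ∈ unitaryGroup n 𝕜 := transpose_mem_unitaryGroup_iff.2 hR
  have hP' := mem_unitaryGroup_iff'.1 hP
  have hR' := mem_unitaryGroup_iff'.1 hRt
  have hvec : ∀ i j, (khatriRao P Rᵀ *ᵥ c) (i, j) = (P * diagonal c * R) i j := fun i j => by
    rw [khatriRao_mulVec_apply, transpose_transpose]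
  have hmean : ∀ i : n × n, 0 ≤ s * a i.1 + t * b i.2 := fun i =>
    add_nonneg (mul_nonneg hs (ha _)) (mul_nonneg ht (hb _))
  have compressed := sum_norm_rpow_rpow_two_div_le_of_compression hp1 hp2
    (conjTranspose_khatriRao_mul_self hP' hR') (khatriRao_compression hP' hR' s t a b) hmean
    (c := c) (fun i hi => (hvec i.1 i.2).trans (hc i.1 i.2 hi))
  simp only [hvec] at compressed
  rw [← Fintype.sum_prod_type' fun i j =>
    ‖(P * diagonal c * R) i j‖ ^ 2 * (s * a i + t * b j) ^ (p - 2)]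
  refine compressed.trans (mul_le_mul_of_nonneg_left (Real.rpow_le_rpow ?_ ?_ ?_) ?_)
  · exact Finset.sum_nonneg fun l _ => Finset.sum_nonneg fun i _ =>
      mul_nonneg (sq_nonneg _) (Real.rpow_nonneg (hmean i) _)
  · exact sum_norm_sq_khatriRao_mul_rpow_le hp1.le hP hRt hs ht hst ha hb
  · rw [sub_nonneg, le_div_iff₀ (by linarith)]
    linarith
  · exact Finset.sum_nonneg fun i _ =>
      mul_nonneg (sq_nonneg _) (Real.rpow_nonneg (hmean i) _)

end Unitary

section EigenvectorUnitary

variable {n 𝕜 : Type*} [Fintype n] [DecidableEq n] [RCLike 𝕜] {A B : Matrix n n 𝕜}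

lemma mul_eigenvectorUnitary (hA : A.IsHermitian) :
    A * hA.eigenvectorUnitary =
      hA.eigenvectorUnitary * diagonal (fun i => (hA.eigenvalues i : 𝕜)) := by
  have := congrArg (· * (hA.eigenvectorUnitary : Matrix n n 𝕜)) hA.spectral_theorem
  simpa only [Unitary.conjStarAlgAut_apply, Matrix.mul_assoc, Unitary.coe_star_mul_self,
    Matrix.mul_one, Function.comp_def] using this

lemma conjTranspose_eigenvectorUnitary_mul (hA : A.IsHermitian) :
    (hA.eigenvectorUnitary : Matrix n n 𝕜)ᴴ * A =
      diagonal (fun i => (hA.eigenvalues i : 𝕜)) * (hA.eigenvectorUnitary : Matrix n n 𝕜)ᴴ := by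
  simpa [conjTranspose_mul, hA.eq, diagonal_conjTranspose, Pi.star_def] using
    congrArg conjTranspose (mul_eigenvectorUnitary hA)

lemma conjTranspose_eigenvectorUnitary_mul_sub_mul_apply (hA : A.IsHermitian)
    (hB : B.IsHermitian) (i j : n) :
    ((hA.eigenvectorUnitary : Matrix n n 𝕜)ᴴ * (A - B) * hB.eigenvectorUnitary) i j =
      ((hA.eigenvalues i - hB.eigenvalues j : ℝ) : 𝕜) *
        ((hA.eigenvectorUnitary : Matrix n n 𝕜)ᴴ * hB.eigenvectorUnitary) i j := by
  rw [Matrix.mul_sub, Matrix.sub_mul, conjTranspose_eigenvectorUnitary_mul hA,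
    Matrix.mul_assoc (diagonal _), Matrix.mul_assoc _ B, mul_eigenvectorUnitary hB,
    ← Matrix.mul_assoc _ _ (diagonal _), Matrix.sub_apply, diagonal_mul, mul_diagonal]
  push_cast
  ring

lemma trace_cfc_mul_sub (hA : A.IsHermitian) (hB : B.IsHermitian) (f : ℝ → ℝ) :
    trace (cfc f B * (A - B)) = ((∑ i, ∑ j,
      ‖((hA.eigenvectorUnitary : Matrix n n 𝕜)ᴴ * hB.eigenvectorUnitary) i j‖ ^ 2 *
        (f (hB.eigenvalues j) * (hA.eigenvalues i - hB.eigenvalues j)) : ℝ) : 𝕜) := by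
  have entry := conjTranspose_eigenvectorUnitary_mul_sub_mul_apply hA hB
  set U := (hA.eigenvectorUnitary : Matrix n n 𝕜)
  set V := (hB.eigenvectorUnitary : Matrix n n 𝕜)
  have hUU : U * Uᴴ = 1 := mem_unitaryGroup_iff.1 hA.eigenvectorUnitary.2
  calc trace (cfc f B * (A - B))
      = trace (V * diagonal (fun j => (f (hB.eigenvalues j) : 𝕜)) * Vᴴ * (A - B)) := by
        rw [hB.cfc_eq]
        rfl
    _ = trace (diagonal (fun j => (f (hB.eigenvalues j) : 𝕜)) *
          ((Uᴴ * V)ᴴ * (Uᴴ * (A - B) * V))) := by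
        rw [Matrix.mul_assoc, Matrix.mul_assoc, trace_mul_comm, conjTranspose_mul,
          conjTranspose_conjTranspose]
        simp only [Matrix.mul_assoc]
        rw [← Matrix.mul_assoc U, hUU, Matrix.one_mul]
    _ = _ := by
        rw [trace, Finset.sum_comm]
        push_cast
        refine Finset.sum_congr rfl fun j _ => ?_
        rw [diag_apply, diagonal_mul, Matrix.mul_apply, Finset.mul_sum]
        refine Finset.sum_congr rfl fun i _ => ?_
        rw [entry, conjTranspose_apply, RCLike.star_def, ← RCLike.conj_mul]
        push_cast
        ring

lemma conjTranspose_mul_mem_unitaryGroup {U V : Matrix n n 𝕜} (hU : U ∈ unitaryGroup n 𝕜)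
    (hV : V ∈ unitaryGroup n 𝕜) : Uᴴ * V ∈ unitaryGroup n 𝕜 :=
  mul_mem (Unitary.star_mem hU) hV

-- Klein's inequality, keeping the second-order remainder.
lemma sum_norm_sq_mul_le_of_forall_le_sub_tangent (hA : A.IsHermitian) (hB : B.IsHermitian)
    {f f' : ℝ → ℝ} {g : ℝ → ℝ → ℝ}
    (h : ∀ α β, (α - β) ^ 2 * g α β ≤ f α - f β - f' β * (α - β)) :
    ∑ i, ∑ j,
      ‖((hA.eigenvectorUnitary : Matrix n n 𝕜)ᴴ * (A - B) * hB.eigenvectorUnitary) i j‖ ^ 2 *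
        g (hA.eigenvalues i) (hB.eigenvalues j) ≤
      ∑ i, f (hA.eigenvalues i) - ∑ j, f (hB.eigenvalues j) -
        RCLike.re (trace (cfc f' B * (A - B))) := by
  have hUV := conjTranspose_mul_mem_unitaryGroup hA.eigenvectorUnitary.2 hB.eigenvectorUnitary.2
  rw [trace_cfc_mul_sub hA hB, RCLike.ofReal_re]
  simp only [conjTranspose_eigenvectorUnitary_mul_sub_mul_apply, norm_mul, RCLike.norm_ofReal,
    mul_pow, sq_abs]
  set w : Matrix n n 𝕜 := (hA.eigenvectorUnitary : Matrix n n 𝕜)ᴴ * hB.eigenvectorUnitary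
  have rows : ∑ i, f (hA.eigenvalues i) = ∑ i, ∑ j, ‖w i j‖ ^ 2 * f (hA.eigenvalues i) := by
    simp only [← Finset.sum_mul, sum_row_norm_sq_of_mem_unitaryGroup hUV, one_mul]
  have cols : ∑ j, f (hB.eigenvalues j) = ∑ i, ∑ j, ‖w i j‖ ^ 2 * f (hB.eigenvalues j) := by
    rw [Finset.sum_comm]
    simp only [← Finset.sum_mul, one_mul,
      sum_norm_sq_of_conjTranspose_mul_self_eq_one (mem_unitaryGroup_iff'.1 hUV)]
  rw [rows, cols]
  simp only [← Finset.sum_sub_distrib, ← mul_sub]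
  refine Finset.sum_le_sum fun i _ => Finset.sum_le_sum fun j _ => ?_
  rw [mul_comm (_ ^ 2) (‖_‖ ^ 2), mul_assoc]
  exact mul_le_mul_of_nonneg_left (h _ _) (sq_nonneg _)

end EigenvectorUnitary

section Schatten

variable {n 𝕜 : Type*} [Fintype n] [DecidableEq n] [RCLike 𝕜] {A B x u : Matrix n n 𝕜} {p : ℝ}

/-- The Schatten `p`-norm `(∑ i, |λ_i| ^ p) ^ (1 / p)` of a Hermitian matrix. The Hermitian proof
is an argument, so that no value has to be chosen for other matrices. -/
noncomputable def schattenNorm (p : ℝ) (hA : A.IsHermitian) : ℝ :=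
  (∑ i, |hA.eigenvalues i| ^ p) ^ (1 / p)

lemma schattenNorm_sq (hA : A.IsHermitian) :
    schattenNorm p hA ^ 2 = (∑ i, |hA.eigenvalues i| ^ p) ^ (2 / p) := by
  rw [schattenNorm, ← Real.rpow_natCast, ← Real.rpow_mul
    (Finset.sum_nonneg fun i _ => Real.rpow_nonneg (abs_nonneg _) p)]
  congr 1
  push_cast
  ring

lemma hermitianSchattenNorm_eq_schattenNorm {m : ℕ} {a : Matrix (Fin m) (Fin m) ℂ}
    (ha : a.IsHermitian) : hermitianSchattenNorm p a = schattenNorm p ha := dif_pos ha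

lemma sum_norm_sq_mul_rpow_le_sum_sub_sum (hp1 : 1 < p) (hp2 : p ≤ 2) (hA : A.IsHermitian)
    (hB : B.IsHermitian) (htrace : trace (cfc (fun t : ℝ => |t| ^ (p - 2) * t) B * (A - B)) = 0) :
    (p - 1) / 2 * ∑ i, ∑ j,
      ‖((hA.eigenvectorUnitary : Matrix n n 𝕜)ᴴ * (A - B) * hB.eigenvectorUnitary) i j‖ ^ 2 *
        (1 / 3 * |hA.eigenvalues i| + 2 / 3 * |hB.eigenvalues j|) ^ (p - 2) ≤
      (∑ i, |hA.eigenvalues i| ^ p - ∑ j, |hB.eigenvalues j| ^ p) / p := by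
  have klein := sum_norm_sq_mul_le_of_forall_le_sub_tangent hA hB (f := fun t => |t| ^ p / p)
    (f' := fun t => |t| ^ (p - 2) * t)
    (g := fun α β => (p - 1) / 2 * (1 / 3 * |α| + 2 / 3 * |β|) ^ (p - 2)) fun α β => by
      have taylor := sq_mul_rpow_le_abs_rpow_sub_tangent hp1 hp2 α β
      rw [show (2 * |β| + |α|) / 3 = 1 / 3 * |α| + 2 / 3 * |β| by ring] at taylor
      have : 0 < p := by linarith
      calc (α - β) ^ 2 * ((p - 1) / 2 * (1 / 3 * |α| + 2 / 3 * |β|) ^ (p - 2))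
          = p * (p - 1) / 2 * (α - β) ^ 2 * (1 / 3 * |α| + 2 / 3 * |β|) ^ (p - 2) / p := by
            field_simp
        _ ≤ (|α| ^ p - |β| ^ p - p * (|β| ^ (p - 2) * β) * (α - β)) / p := by gcongr
        _ = |α| ^ p / p - |β| ^ p / p - |β| ^ (p - 2) * β * (α - β) := by field_simp
  simpa only [htrace, map_zero, sub_zero, mul_left_comm _ ((p - 1) / 2), ← Finset.mul_sum,
    ← Finset.sum_div, ← sub_div] using klein

lemma sum_abs_eigenvalues_sub_rpow_rpow_two_div_le (hp1 : 1 < p) (hp2 : p ≤ 2)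
    (hA : A.IsHermitian) (hB : B.IsHermitian) (hAB : (A - B).IsHermitian) {s t : ℝ}
    (hs : 0 < s) (ht : 0 < t) (hst : s + t = 1) :
    (∑ l, |hAB.eigenvalues l| ^ p) ^ (2 / p) ≤
      (∑ i, ∑ j,
        ‖((hA.eigenvectorUnitary : Matrix n n 𝕜)ᴴ * (A - B) * hB.eigenvectorUnitary) i j‖ ^ 2 *
          (s * |hA.eigenvalues i| + t * |hB.eigenvalues j|) ^ (p - 2)) *
        (s * ∑ i, |hA.eigenvalues i| ^ p + t * ∑ j, |hB.eigenvalues j| ^ p) ^ (2 / p - 1) := by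
  have factor : (hA.eigenvectorUnitary : Matrix n n 𝕜)ᴴ * (A - B) * hB.eigenvectorUnitary =
      (hA.eigenvectorUnitary : Matrix n n 𝕜)ᴴ * hAB.eigenvectorUnitary *
        diagonal (fun l => (hAB.eigenvalues l : 𝕜)) *
        ((hAB.eigenvectorUnitary : Matrix n n 𝕜)ᴴ * hB.eigenvectorUnitary) := by
    rw [Matrix.mul_assoc _ _ (diagonal _), ← mul_eigenvectorUnitary hAB]
    simp only [Matrix.mul_assoc]
    rw [← Matrix.mul_assoc (hAB.eigenvectorUnitary : Matrix n n 𝕜),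
      show (hAB.eigenvectorUnitary : Matrix n n 𝕜) * (hAB.eigenvectorUnitary : Matrix n n 𝕜)ᴴ = 1
        from mem_unitaryGroup_iff.1 hAB.eigenvectorUnitary.2, Matrix.one_mul]
  have vanish : ∀ i j, s * |hA.eigenvalues i| + t * |hB.eigenvalues j| = 0 →
      ((hA.eigenvectorUnitary : Matrix n n 𝕜)ᴴ * (A - B) * hB.eigenvectorUnitary) i j = 0 := by
    intro i j h
    rw [add_eq_zero_iff_of_nonneg (by positivity) (by positivity)] at h
    simp only [mul_eq_zero, hs.ne', ht.ne', false_or, abs_eq_zero] at h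
    simp [conjTranspose_eigenvectorUnitary_mul_sub_mul_apply, h]
  simp only [factor] at vanish ⊢
  have := sum_norm_rpow_rpow_two_div_le_of_mem_unitaryGroup hp1 hp2
    (conjTranspose_mul_mem_unitaryGroup hA.eigenvectorUnitary.2 hAB.eigenvectorUnitary.2)
    (conjTranspose_mul_mem_unitaryGroup hAB.eigenvectorUnitary.2 hB.eigenvectorUnitary.2)
    hs.le ht.le hst (a := fun i => |hA.eigenvalues i|)
    (b := fun j => |hB.eigenvalues j|) (fun _ => abs_nonneg _) (fun _ => abs_nonneg _) vanish
  simpa only [RCLike.norm_ofReal] using this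

theorem schattenNorm_sq_add_le_of_trace_eq_zero (hp1 : 1 < p) (hp2 : p ≤ 2) (hA : A.IsHermitian)
    (hB : B.IsHermitian) (htrace : trace (cfc (fun t : ℝ => |t| ^ (p - 2) * t) B * (A - B)) = 0) :
    schattenNorm p hB ^ 2 + (p - 1) * schattenNorm p (hA.sub hB) ^ 2 ≤ schattenNorm p hA ^ 2 := by
  have hp0 : 0 < p := by linarith
  have hr : 1 ≤ 2 / p := by rwa [le_div_iff₀ hp0, one_mul]
  have klein := sum_norm_sq_mul_rpow_le_sum_sub_sum hp1 hp2 hA hB htrace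
  have lower := sum_abs_eigenvalues_sub_rpow_rpow_two_div_le hp1 hp2 hA hB (hA.sub hB)
    (s := 1 / 3) (t := 2 / 3) (by norm_num) (by norm_num) (by norm_num)
  simp only [schattenNorm_sq]
  set N := ∑ l, |(hA.sub hB).eigenvalues l| ^ p
  set S := ∑ i, ∑ j,
    ‖((hA.eigenvectorUnitary : Matrix n n 𝕜)ᴴ * (A - B) * hB.eigenvectorUnitary) i j‖ ^ 2 *
      (1 / 3 * |hA.eigenvalues i| + 2 / 3 * |hB.eigenvalues j|) ^ (p - 2)
  have hS : 0 ≤ S := by positivity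
  set a := ∑ i, |hA.eigenvalues i| ^ p
  set b := ∑ j, |hB.eigenvalues j| ^ p
  have hb : 0 ≤ b := by positivity
  have hba : b ≤ a := by
    have : 0 ≤ (a - b) / p := le_trans (mul_nonneg (by linarith) hS) klein
    linarith [(le_div_iff₀ hp0).1 this]
  have gap := sub_mul_rpow_le_rpow_sub_rpow hr hb hba
  rw [show (2 * b + a) / 3 = 1 / 3 * a + 2 / 3 * b by ring] at gap
  set M := 1 / 3 * a + 2 / 3 * b
  have : 0 ≤ M ^ (2 / p - 1) := Real.rpow_nonneg (by positivity) _
  have : (p - 1) * N ^ (2 / p) ≤ a ^ (2 / p) - b ^ (2 / p) :=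
    calc (p - 1) * N ^ (2 / p) ≤ (p - 1) * (S * M ^ (2 / p - 1)) := by gcongr
      _ = 2 * ((p - 1) / 2 * S) * M ^ (2 / p - 1) := by ring
      _ ≤ 2 * ((a - b) / p) * M ^ (2 / p - 1) := by gcongr
      _ = 2 / p * ((a - b) * M ^ (2 / p - 1)) := by ring
      _ ≤ 2 / p * ((a ^ (2 / p) - b ^ (2 / p)) / (2 / p)) := by gcongr
      _ = a ^ (2 / p) - b ^ (2 / p) := mul_div_cancel₀ _ (by positivity)
  linarith

end Schatten

section Conjugation

lemma trace_mul_eq_zero_of_conj_eq_neg {n R : Type*} [Fintype n] [DecidableEq n] [CommRing R]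
    [IsAddTorsionFree R] {D H u : Matrix n n R} (hu : u * u = 1) (hD : Commute u D)
    (hH : u * H * u = -H) : trace (D * H) = 0 := by
  refine self_eq_neg.1 ?_
  calc trace (D * H) = trace (u * (u * D) * H) := by
        rw [← Matrix.mul_assoc, hu, Matrix.one_mul]
    _ = trace (u * (D * u * H)) := by rw [hD.eq, Matrix.mul_assoc]
    _ = trace (D * (u * H * u)) := by rw [trace_mul_comm]; simp only [Matrix.mul_assoc]
    _ = -trace (D * H) := by rw [hH, Matrix.mul_neg, trace_neg]

variable {n 𝕜 : Type*} [Fintype n] [DecidableEq n] [RCLike 𝕜] {x u : Matrix n n 𝕜}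

lemma commute_add_conj (hu : u * u = 1) : Commute u (x + u * x * u) := by
  have h1 : u * (u * x * u) = x * u := by
    rw [← Matrix.mul_assoc, ← Matrix.mul_assoc, hu, Matrix.one_mul]
  have h2 : u * x * u * u = u * x := by rw [Matrix.mul_assoc, hu, Matrix.mul_one]
  rw [commute_iff_eq, Matrix.mul_add, Matrix.add_mul, h1, h2, add_comm]

lemma conj_sub_conj_eq_neg (hu : u * u = 1) : u * (x - u * x * u) * u = -(x - u * x * u) := by
  have h : u * (u * x * u) * u = x := by
    simp only [Matrix.mul_assoc, hu, Matrix.mul_one]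
    rw [← Matrix.mul_assoc, hu, Matrix.one_mul]
  rw [Matrix.mul_sub, Matrix.sub_mul, h, neg_sub]

theorem martingale_convexity_matrix_conjugation_general {p : ℝ} (hp1 : 1 < p) (hp2 : p ≤ 2)
    (hx : x.IsHermitian) (hu : u * u = 1)
    (hadd : ((1 / 2 : 𝕜) • (x + u * x * u)).IsHermitian)
    (hsub : ((1 / 2 : 𝕜) • (x - u * x * u)).IsHermitian) :
    schattenNorm p hadd ^ 2 + (p - 1) * schattenNorm p hsub ^ 2 ≤ schattenNorm p hx ^ 2 := by
  have split : x - (1 / 2 : 𝕜) • (x + u * x * u) = (1 / 2 : 𝕜) • (x - u * x * u) := by module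
  have commute : Commute u (cfc (fun t : ℝ => |t| ^ (p - 2) * t) ((1 / 2 : 𝕜) • (x + u * x * u))) :=
    (((commute_add_conj hu).smul_right _).symm.cfc_real _).symm
  have htrace := trace_mul_eq_zero_of_conj_eq_neg (H := (1 / 2 : 𝕜) • (x - u * x * u)) hu commute
    (by rw [Matrix.mul_smul, Matrix.smul_mul, conj_sub_conj_eq_neg hu, smul_neg])
  rw [← split] at htrace
  simpa only [split] using schattenNorm_sq_add_le_of_trace_eq_zero hp1 hp2 hx hadd htrace

end Conjugation

/-- Matrix instance of the martingale convexity inequality, `1 < p ≤ 2`: for `x` Hermitian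
and `u` a Hermitian unitary,
`‖x‖_p² ≥ ‖(x + uxu)/2‖_p² + (p−1)·‖(x − uxu)/2‖_p²`. -/
theorem martingale_convexity_matrix_conjugation {n : ℕ} (hn : 1 ≤ n)
    (p : ℝ) (hp1 : 1 < p) (hp2 : p ≤ 2)
    (x u : Matrix (Fin n) (Fin n) ℂ) (hx : x.IsHermitian) (hu : u.IsHermitian)
    (hu_unitary : u * u = 1) :
    hermitianSchattenNorm p x ^ 2
    ≥ hermitianSchattenNorm p (((1 : ℂ) / 2) • (x + u * x * u)) ^ 2
      + (p - 1) * hermitianSchattenNorm p (((1 : ℂ) / 2) • (x - u * x * u)) ^ 2 := by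
  have huxu : (u * x * u).IsHermitian := by
    simpa only [hu.eq] using isHermitian_mul_mul_conjTranspose u hx
  have half : IsSelfAdjoint ((1 : ℂ) / 2) := by simp [isSelfAdjoint_iff]
  have hadd := half.smul (hx.add huxu).isSelfAdjoint
  have hsub := half.smul (hx.sub huxu).isSelfAdjoint
  rw [hermitianSchattenNorm_eq_schattenNorm hx, hermitianSchattenNorm_eq_schattenNorm hadd,
    hermitianSchattenNorm_eq_schattenNorm hsub]
  exact martingale_convexity_matrix_conjugation_general hp1 hp2 hx hu_unitary hadd hsub
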